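/- Let d ∈ ℕ, 0 < p,q < ∞ and 0 ≤ s < 1/p. There exists a constant c > 0 depending only on p, q, s, d such that for every infinite sequence S in [0,1)^d and every integer N ≥ 2 one has (∑_{j∈ℕ_{−1}^d} 2^{|j|(s−1/p+1)q} (∑_{m∈𝔻_j} |⟨D_S^N, h_{j,m}⟩|^p)^{q/p})^{1/q} ≥ c · N^{s−1} (log N)^{(d−1)/q}. -/

import Mathlib

open MeasureTheory
open scoped ENNReal

noncomputable section

/-- The closed unit cube `[0,1]^d`. -/
def unitCube (d : ℕ) : Set (Fin d → ℝ) := Set.univ.pi fun _ => Set.Icc (0:ℝ) 1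

/-- The half-open unit cube `[0,1)^d`. -/
def unitCubeIco (d : ℕ) : Set (Fin d → ℝ) := Set.univ.pi fun _ => Set.Ico (0:ℝ) 1

/-- Discrepancy function of the first `N` points of the sequence `S` in `[0,1)^d`. -/
def discSeq (d : ℕ) (S : ℕ → Fin d → ℝ) (N : ℕ) (x : Fin d → ℝ) : ℝ :=
  (Nat.card {k : Fin N // ∀ i, S k i < x i} : ℝ) / N - ∏ i, x i

/-- One-dimensional Haar function `h_{j,m}`, with `h_{-1,0} = 1_{[0,1)}`. -/
def haar1 (j : ℤ) (m : ℕ) (x : ℝ) : ℝ :=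
  if j = -1 then (if 0 ≤ x ∧ x < 1 then 1 else 0)
  else if (m:ℝ)/2^j.toNat ≤ x ∧ x < ((m:ℝ) + 1/2)/2^j.toNat then 1
  else if ((m:ℝ) + 1/2)/2^j.toNat ≤ x ∧ x < ((m:ℝ)+1)/2^j.toNat then -1
  else 0

/-- `d`-dimensional (tensor product) Haar function. -/
def haarFn (d : ℕ) (j : Fin d → ℤ) (m : Fin d → ℕ) (x : Fin d → ℝ) : ℝ :=
  ∏ i, haar1 (j i) (m i) (x i)

/-- Haar coefficient `⟨f, h_{j,m}⟩`. -/
def haarCoeff (d : ℕ) (f : (Fin d → ℝ) → ℝ) (j : Fin d → ℤ) (m : Fin d → ℕ) : ℝ :=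
  ∫ x in unitCube d, f x * haarFn d j m x

/-- `|j| = max(j₁,0) + ⋯ + max(j_d,0)`. -/
def jnorm (d : ℕ) (j : Fin d → ℤ) : ℕ := ∑ i, (j i).toNat

/-- One-dimensional dyadic interval `I_{j,m}`. -/
def dyadicI (j : ℤ) (m : ℕ) : Set ℝ :=
  Set.Ico ((m:ℝ)/2^j.toNat) (((m:ℝ)+1)/2^j.toNat)

/-- `d`-dimensional dyadic box `I_{j,m}`. -/
def dyadicBox (d : ℕ) (j : Fin d → ℤ) (m : Fin d → ℕ) : Set (Fin d → ℝ) :=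
  Set.univ.pi fun i => dyadicI (j i) (m i)

/-- The index set `𝔻_j` as a finset. -/
def Dfin (d : ℕ) (j : Fin d → ℤ) : Finset (Fin d → ℕ) :=
  Fintype.piFinset fun i => Finset.range (2 ^ (j i).toNat)

/-- The index set `𝔻_j` for `j ∈ ℕ₀^d`. -/
def Dfin0 (d : ℕ) (j : Fin d → ℕ) : Finset (Fin d → ℕ) :=
  Fintype.piFinset fun i => Finset.range (2 ^ (j i))

/-- Coordinate of the `k`-th point of a digital sequence over `𝔽₂` with generating
matrix `C` (`0`-based rows and columns). -/
def digitalCoord (C : ℕ → ℕ → ZMod 2) (k : ℕ) : ℝ :=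
  ∑' i : ℕ,
    (((∑ ℓ ∈ Finset.range (k+1), C i ℓ * (if k.testBit ℓ then 1 else 0)).val : ℕ) : ℝ) / 2 ^ (i + 1)

/-- The digital sequence over `𝔽₂` generated by matrices `C 0, …, C (d-1)`. -/
def digitalSeq (d : ℕ) (C : Fin d → ℕ → ℕ → ZMod 2) : ℕ → Fin d → ℝ :=
  fun k j => digitalCoord (C j) k

/-- `C 0, …, C (d-1)` generate an order `α` digital `(t,n,d)`-net over `𝔽₂`,
where the relevant submatrices have `q` rows (`q ≥ αn`) and `n` columns.
Row indices are `0`-based; the `1`-based row value of row `r` is `r+1`. -/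
def IsOrderNet (α n t q d : ℕ) (C : Fin d → ℕ → ℕ → ZMod 2) : Prop :=
  ∀ (ν : Fin d → ℕ) (r : ∀ j : Fin d, Fin (ν j) → ℕ),
    (∀ j, StrictAnti (r j)) →
    (∀ j l, r j l < q) →
    (∑ j, ∑ l ∈ Finset.univ.filter (fun l : Fin (ν j) => (l:ℕ) < α), (r j l + 1)) ≤ α * n - t →
    LinearIndependent (ZMod 2)
      (fun p : Σ j : Fin d, Fin (ν j) => fun col : Fin n => C p.1 (r p.1 p.2) col)

/-- `C 0, …, C (d-1)` generate an order `α` digital `(t,d)`-sequence over `𝔽₂`. -/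
def IsOrderSeq (α t d : ℕ) (C : Fin d → ℕ → ℕ → ZMod 2) : Prop :=
  ∀ n : ℕ, t < α * n → IsOrderNet α n t (α * n) d C

/-- The condition `e_{i,k,ℓ} = 0` for all `k > 2ℓ` (in `1`-based indexing). -/
def Triangular2 (d : ℕ) (E : Fin d → ℕ → ℕ → ZMod 2) : Prop :=
  ∀ i k ℓ, 2 * (ℓ + 1) < k + 1 → E i k ℓ = 0

open scoped Classical in
/-- The quantity `λ(U)⁻¹ ∑_{j ∈ ℕ₀^d} 2^{|j|} ∑_{m : I_{j,m} ⊆ U} ⟨f,h_{j,m}⟩²`. -/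
def bmoSq (d : ℕ) (f : (Fin d → ℝ) → ℝ) (U : Set (Fin d → ℝ)) : ℝ≥0∞ :=
  (volume U)⁻¹ * ∑' j : Fin d → ℕ, ∑ m ∈ Dfin0 d j,
    if dyadicBox d (fun i => (j i : ℤ)) m ⊆ U then
      (2:ℝ≥0∞) ^ (∑ i, j i) * ENNReal.ofReal ((haarCoeff d f (fun i => (j i : ℤ)) m)^2)
    else 0

/-- The BMO (semi-)norm `‖f | bmo^d‖`. -/
def bmoNorm (d : ℕ) (f : (Fin d → ℝ) → ℝ) : ℝ≥0∞ :=
  (⨆ U : {U : Set (Fin d → ℝ) // MeasurableSet U ∧ U ⊆ unitCubeIco d ∧ 0 < volume U},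
    bmoSq d f U.1) ^ (1/2 : ℝ)

/-- The Orlicz norm of `f` on `[0,1)^d` with respect to the Young function `ψ`,
with the convention `inf ∅ = ∞`. -/
def orliczNorm (d : ℕ) (ψ : ℝ → ℝ) (f : (Fin d → ℝ) → ℝ) : ℝ≥0∞ :=
  ⨅ K : {K : ℝ // 0 < K ∧ ∫ x in unitCubeIco d, ψ (|f x| / K) ≤ 1}, ENNReal.ofReal K.1

/-- `ψ` is a Young function which coincides with `exp(x^β) - 1` for all large `x`. -/
def IsYoungExp (β : ℝ) (ψ : ℝ → ℝ) : Prop :=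
  ConvexOn ℝ (Set.Ici 0) ψ ∧ ψ 0 = 0 ∧ (∀ x : ℝ, 0 < x → 0 < ψ x) ∧
    ∃ x₀ : ℝ, ∀ x ≥ x₀, ψ x = Real.exp (x ^ β) - 1

/-- The set of valid Haar indices `j ∈ ℕ_{-1}^d`. -/
def validJ (d : ℕ) : Set (Fin d → ℤ) := {j | ∀ i, -1 ≤ j i}

/-- The `q`-th power of the Haar-characterization of the `S^s_{p,q}B` norm:
`∑_{j ∈ ℕ_{-1}^d} 2^{|j|(s-1/p+1)q} (∑_{m ∈ 𝔻_j} |⟨f,h_{j,m}⟩|^p)^{q/p}`. -/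
def besovSum (d : ℕ) (p q s : ℝ) (f : (Fin d → ℝ) → ℝ) : ℝ≥0∞ :=
  ∑' j : validJ d,
    ENNReal.ofReal ((2:ℝ) ^ ((jnorm d j.1 : ℝ) * (s - 1/p + 1) * q) *
      (∑ m ∈ Dfin d j.1, |haarCoeff d f j.1 m| ^ p) ^ (q / p))

/-- Coordinate of the `k`-th point of a digital net with `q × n` generating matrix `C`. -/
def netCoord (q n : ℕ) (C : ℕ → ℕ → ZMod 2) (k : ℕ) : ℝ :=
  ∑ i ∈ Finset.range q,
    ((∑ ℓ ∈ Finset.range n, C i ℓ * (if k.testBit ℓ then 1 else 0)).val : ℝ) / 2 ^ (i + 1)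

/-- `n_{μ+1}`, with the convention `n_{r+1} = log₂ N` (indices `1`-based, `n` stored `0`-based). -/
def nExt (r : ℕ) (n : Fin r → ℕ) (N : ℕ) (μ : ℕ) : ℝ :=
  if h : μ < r then (n ⟨μ, h⟩ : ℝ) else Real.logb 2 N

/-- `n_μ`, with the convention `n_0 = 0` (indices `1`-based, `n` stored `0`-based). -/
def nPrev (r : ℕ) (n : Fin r → ℕ) (μ : ℕ) : ℝ :=
  if h : 1 ≤ μ ∧ μ ≤ r then (n ⟨μ - 1, by omega⟩ : ℝ) else 0

/-- The dyadic square function `Sf`, valued in `ℝ≥0∞`. -/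
def sqFnE (d : ℕ) (f : (Fin d → ℝ) → ℝ) (x : Fin d → ℝ) : ℝ≥0∞ :=
  (∑' j : validJ d, ∑ m ∈ Dfin d j.1,
    ENNReal.ofReal ((2:ℝ) ^ (2 * jnorm d j.1) * (haarCoeff d f j.1 m)^2 *
      (dyadicBox d j.1 m).indicator (fun _ => (1:ℝ)) x)) ^ (1/2 : ℝ)

/-- `sup_{p > 1} p^{-1/β} ‖f‖_{L_p([0,1]^d)}`. -/
def supLp (d : ℕ) (β : ℝ) (f : (Fin d → ℝ) → ℝ) : ℝ≥0∞ :=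
  ⨆ p : {p : ℝ // 1 < p},
    ENNReal.ofReal ((p:ℝ) ^ (-(1/β))) * eLpNorm f (ENNReal.ofReal (p:ℝ)) (volume.restrict (unitCube d))

/-- `‖f | 𝒟₀^d‖² = ∑_{j ∈ ℕ₀^d} 2^{|j|} ∑_{m ∈ 𝔻_j} ⟨f,h_{j,m}⟩²`. -/
def dNormSq (d : ℕ) (f : (Fin d → ℝ) → ℝ) : ℝ≥0∞ :=
  ∑' j : Fin d → ℕ, ∑ m ∈ Dfin0 d j,
    ENNReal.ofReal ((2:ℝ) ^ (∑ i, j i) * (haarCoeff d f (fun i => (j i : ℤ)) m)^2)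

/-- `‖f | 𝒟₀^d‖`. -/
def dNorm (d : ℕ) (f : (Fin d → ℝ) → ℝ) : ℝ≥0∞ := (dNormSq d f) ^ (1/2 : ℝ)

/-!
Fix `n` with `2 N ≤ 2 ^ n ≤ 4 N`. For every `j ∈ ℕ₀^d` with `|j| = n`, the `2 ^ n` boxes `I_{j,m}`
partition `[0,1)^d`, so at least half of them contain none of the `N` points. On such a box the
counting part of the discrepancy function is orthogonal to `h_{j,m}`, and only the coefficient of
the volume part `x₁ ⋯ x_d` is left, which is `± 4 ^ (-(n + d))` whatever the points are. Hence each
of these `j` contributes at least `(C (2 ^ n) ^ (s - 1)) ^ q` to the sum, and there are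
`(n + d - 1).choose (d - 1) ≥ (n + 1) ^ (d - 1) / (d - 1)!` of them.
-/

lemma min_one_rpow_mul_rpow_le {x y C : ℝ} (t : ℝ) (hx : 0 < x) (hC : 0 ≤ C) (hxy : x ≤ y)
    (hyC : y ≤ C * x) : min 1 (C ^ t) * x ^ t ≤ y ^ t := by
  rcases le_total 0 t with ht | ht
  · calc min 1 (C ^ t) * x ^ t ≤ 1 * x ^ t := by gcongr; exact min_le_left _ _
      _ = x ^ t := one_mul _
      _ ≤ y ^ t := by gcongr
  · calc min 1 (C ^ t) * x ^ t ≤ C ^ t * x ^ t := by gcongr; exact min_le_right _ _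
      _ = (C * x) ^ t := (Real.mul_rpow hC hx.le).symm
      _ ≤ y ^ t := Real.rpow_le_rpow_of_nonpos (hx.trans_le hxy) hyC ht

lemma two_pow_rpow_sub_one_eq (n : ℕ) (p s : ℝ) :
    ((2 : ℝ) ^ n) ^ (s - 1) =
      2 ^ (n * (s - 1 / p + 1)) * (2 ^ n) ^ (1 / p) * (4 ^ n)⁻¹ := by
  have four_pow : (4 ^ n)⁻¹ = ((2 : ℝ) ^ n) ^ (-2 : ℝ) := by
    rw [Real.rpow_neg (by positivity), Real.rpow_two, pow_right_comm]
    norm_num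
  rw [four_pow, Real.rpow_mul zero_le_two, Real.rpow_natCast, ← Real.rpow_add (by positivity),
    ← Real.rpow_add (by positivity)]
  ring_nf

lemma exists_two_mul_le_two_pow_le_four_mul {N : ℕ} (hN : 0 < N) :
    ∃ n : ℕ, 2 * N ≤ 2 ^ n ∧ 2 ^ n ≤ 4 * N := by
  refine ⟨Nat.log 2 N + 2, ?_, ?_⟩
  · calc 2 * N ≤ 2 * 2 ^ (Nat.log 2 N + 1) := by
          gcongr
          exact (Nat.lt_pow_succ_log_self one_lt_two N).le
      _ = 2 ^ (Nat.log 2 N + 2) := (pow_succ' 2 _).symm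
  · calc 2 ^ (Nat.log 2 N + 2) = 4 * 2 ^ Nat.log 2 N := by ring
      _ ≤ 4 * N := by
          gcongr
          exact Nat.pow_log_le_self 2 hN.ne'

lemma log_natCast_le_of_le_two_pow {N n : ℕ} (hN : N ≤ 2 ^ n) : Real.log N ≤ n := by
  rcases N.eq_zero_or_pos with rfl | hpos
  · simp
  · calc Real.log N ≤ Real.log (2 ^ n) := by gcongr; exact_mod_cast hN
      _ = n * Real.log 2 := Real.log_pow _ _
      _ ≤ n := mul_le_of_le_one_right n.cast_nonneg (by linarith [Real.log_two_lt_d9])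

lemma card_piAntidiag {ι : Type*} [DecidableEq ι] (t : Finset ι) (n : ℕ) :
    (t.piAntidiag n).card = (t.card + n - 1).choose n := by
  rw [← Finset.card_finsuppAntidiag_nat_eq_choose, Finset.finsuppAntidiag]
  simp

lemma pow_div_factorial_le_card_piAntidiag_univ {d : ℕ} (hd : 0 < d) (n : ℕ) :
    ((n : ℝ) + 1) ^ (d - 1) / (d - 1).factorial ≤
      ((Finset.univ : Finset (Fin d)).piAntidiag n).card := by
  have choose_symm : (d + n - 1).choose n = (n + (d - 1)).choose (d - 1) := by
    rw [show d + n - 1 = n + (d - 1) by lia, Nat.choose_symm_add]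
  have pow_le := Nat.pow_le_choose (α := ℝ) (d - 1) (n + (d - 1))
  rw [add_right_comm, Nat.add_sub_cancel] at pow_le
  rw [card_piAntidiag, Finset.card_univ, Fintype.card_fin, choose_symm]
  exact_mod_cast pow_le

section OneDimensional

variable {j : ℤ} {m : ℕ}

lemma measurableSet_dyadicI : MeasurableSet (dyadicI j m) := measurableSet_Ico

lemma volume_real_dyadicI : volume.real (dyadicI j m) = (2 ^ j.toNat)⁻¹ := by
  rw [dyadicI, Real.volume_real_Ico_of_le (by gcongr; linarith)]
  ring

lemma dyadicI_subset_Icc (hm : m < 2 ^ j.toNat) : dyadicI j m ⊆ Set.Icc 0 1 := by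
  have hm' : (m : ℝ) + 1 ≤ 2 ^ j.toNat := mod_cast hm
  exact Set.Ico_subset_Icc_self.trans
    (Set.Icc_subset_Icc (by positivity) ((div_le_one (by positivity)).2 hm'))

lemma floor_eq_of_mem_dyadicI {x : ℝ} (hx : x ∈ dyadicI j m) : ⌊x * 2 ^ j.toNat⌋₊ = m := by
  have hpow : (0 : ℝ) < 2 ^ j.toNat := by positivity
  rw [dyadicI, Set.mem_Ico, div_le_iff₀ hpow, lt_div_iff₀ hpow] at hx
  exact (Nat.floor_eq_iff ((Nat.cast_nonneg m).trans hx.1)).2 hx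

lemma setIntegral_dyadicI_id : ∫ x in dyadicI j m, x = (m + 1 / 2) * (4 ^ j.toNat)⁻¹ := by
  have hle : (m : ℝ) / 2 ^ j.toNat ≤ (m + 1) / 2 ^ j.toNat := by gcongr; linarith
  rw [dyadicI, integral_Ico_eq_integral_Ioc, ← intervalIntegral.integral_of_le hle, integral_id,
    show (4 : ℝ) = 2 ^ 2 by norm_num, pow_right_comm]
  field_simp
  ring

lemma dyadicI_add_one_two_mul (hj : 0 ≤ j) :
    dyadicI (j + 1) (2 * m) = Set.Ico ((m : ℝ) / 2 ^ j.toNat) ((m + 1 / 2) / 2 ^ j.toNat) := by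
  rw [dyadicI, Int.toNat_add hj zero_le_one, Int.toNat_one, pow_succ]
  push_cast
  congr 1 <;> field_simp

lemma dyadicI_add_one_two_mul_add_one (hj : 0 ≤ j) : dyadicI (j + 1) (2 * m + 1) =
    Set.Ico (((m : ℝ) + 1 / 2) / 2 ^ j.toNat) ((m + 1) / 2 ^ j.toNat) := by
  rw [dyadicI, Int.toNat_add hj zero_le_one, Int.toNat_one, pow_succ]
  push_cast
  congr 1 <;> field_simp
  ring

lemma dyadicI_add_one_two_mul_subset (hj : 0 ≤ j) : dyadicI (j + 1) (2 * m) ⊆ dyadicI j m := by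
  rw [dyadicI_add_one_two_mul hj]
  exact Set.Ico_subset_Ico_right (by gcongr; norm_num)

lemma dyadicI_add_one_two_mul_add_one_subset (hj : 0 ≤ j) :
    dyadicI (j + 1) (2 * m + 1) ⊆ dyadicI j m := by
  rw [dyadicI_add_one_two_mul_add_one hj]
  exact Set.Ico_subset_Ico_left (by gcongr; linarith)

lemma mul_haar1_eq_indicator_sub_indicator (hj : 0 ≤ j) (f : ℝ → ℝ) (x : ℝ) :
    f x * haar1 j m x = (dyadicI (j + 1) (2 * m)).indicator f x -
      (dyadicI (j + 1) (2 * m + 1)).indicator f x := by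
  rw [dyadicI_add_one_two_mul hj, dyadicI_add_one_two_mul_add_one hj, haar1, if_neg (by lia)]
  simp only [Set.indicator_apply, Set.mem_Ico]
  grind

lemma measurable_haar1 : Measurable (haar1 j m) := by
  unfold haar1
  split_ifs
  · exact .ite measurableSet_Ico measurable_const measurable_const
  · exact .ite measurableSet_Ico measurable_const
      (.ite measurableSet_Ico measurable_const measurable_const)

lemma abs_haar1_le_one (x : ℝ) : |haar1 j m x| ≤ 1 := by
  unfold haar1
  split_ifs <;> simp

lemma setIntegral_mul_haar1 (hj : 0 ≤ j) {f : ℝ → ℝ} {K : Set ℝ} (hf : IntegrableOn f K)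
    (hK : dyadicI j m ⊆ K) :
    ∫ x in K, f x * haar1 j m x =
      (∫ x in dyadicI (j + 1) (2 * m), f x) - ∫ x in dyadicI (j + 1) (2 * m + 1), f x := by
  simp_rw [mul_haar1_eq_indicator_sub_indicator hj]
  rw [integral_sub (hf.indicator measurableSet_dyadicI) (hf.indicator measurableSet_dyadicI),
    setIntegral_indicator measurableSet_dyadicI, setIntegral_indicator measurableSet_dyadicI,
    Set.inter_eq_self_of_subset_right ((dyadicI_add_one_two_mul_subset hj).trans hK),
    Set.inter_eq_self_of_subset_right ((dyadicI_add_one_two_mul_add_one_subset hj).trans hK)]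

lemma setIntegral_id_mul_haar1 (hj : 0 ≤ j) (hm : m < 2 ^ j.toNat) :
    ∫ x in Set.Icc 0 1, x * haar1 j m x = -(4 ^ (j.toNat + 1))⁻¹ := by
  rw [setIntegral_mul_haar1 (f := fun x => x) hj continuous_id.continuousOn.integrableOn_Icc
      (dyadicI_subset_Icc hm),
    setIntegral_dyadicI_id, setIntegral_dyadicI_id, Int.toNat_add hj zero_le_one, Int.toNat_one]
  push_cast
  ring

lemma setIntegral_mul_haar1_eq_zero_of_eqOn_const (hj : 0 ≤ j) {f : ℝ → ℝ} {K : Set ℝ} {c : ℝ}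
    (hf : IntegrableOn f K) (hK : dyadicI j m ⊆ K) (hc : Set.EqOn f (fun _ => c) (dyadicI j m)) :
    ∫ x in K, f x * haar1 j m x = 0 := by
  rw [setIntegral_mul_haar1 hj hf hK,
    setIntegral_congr_fun measurableSet_dyadicI (hc.mono (dyadicI_add_one_two_mul_subset hj)),
    setIntegral_congr_fun measurableSet_dyadicI
      (hc.mono (dyadicI_add_one_two_mul_add_one_subset hj)),
    setIntegral_const, setIntegral_const, volume_real_dyadicI, volume_real_dyadicI, sub_self]

lemma integrableOn_indicator_Ioi (z : ℝ) :
    IntegrableOn ((Set.Ioi z).indicator (1 : ℝ → ℝ)) (Set.Icc 0 1) :=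
  (integrableOn_const (by simp)).indicator measurableSet_Ioi

lemma setIntegral_indicator_Ioi_mul_haar1_eq_zero (hj : 0 ≤ j) (hm : m < 2 ^ j.toNat) {z : ℝ}
    (hz : z ∉ dyadicI j m) :
    ∫ x in Set.Icc 0 1, (Set.Ioi z).indicator 1 x * haar1 j m x = 0 := by
  have eqOn_const_of_lt (h : z < m / 2 ^ j.toNat) :
      Set.EqOn ((Set.Ioi z).indicator (1 : ℝ → ℝ)) (fun _ => 1) (dyadicI j m) :=
    fun x hx => Set.indicator_of_mem (h.trans_le hx.1) _
  have eqOn_const_of_ge (h : (m + 1) / 2 ^ j.toNat ≤ z) :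
      Set.EqOn ((Set.Ioi z).indicator (1 : ℝ → ℝ)) (fun _ => 0) (dyadicI j m) :=
    fun x hx => Set.indicator_of_notMem (hx.2.trans_le h).not_gt _
  have integral_eq_zero {c : ℝ} := setIntegral_mul_haar1_eq_zero_of_eqOn_const (c := c) hj
    (integrableOn_indicator_Ioi z) (dyadicI_subset_Icc hm)
  obtain h | h : z < m / 2 ^ j.toNat ∨ (m + 1) / 2 ^ j.toNat ≤ z := by
    simpa only [dyadicI, Set.mem_Ico, not_and_or, not_le, not_lt] using hz
  · exact integral_eq_zero (eqOn_const_of_lt h)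
  · exact integral_eq_zero (eqOn_const_of_ge h)

end OneDimensional

section HaarCoefficients

variable {d : ℕ} {j : Fin d → ℤ} {m : Fin d → ℕ}

lemma volume_restrict_unitCube : (volume : Measure (Fin d → ℝ)).restrict (unitCube d) =
    Measure.pi fun _ => (volume : Measure ℝ).restrict (Set.Icc 0 1) := by
  rw [unitCube, volume_pi, Measure.restrict_pi_pi]

lemma measurable_haarFn : Measurable (haarFn d j m) :=
  Finset.measurable_prod _ fun i _ => measurable_haar1.comp (measurable_pi_apply i)

lemma abs_haarFn_le_one (x : Fin d → ℝ) : |haarFn d j m x| ≤ 1 := by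
  rw [haarFn, Finset.abs_prod]
  exact Finset.prod_le_one (fun _ _ => abs_nonneg _) fun _ _ => abs_haar1_le_one _

lemma integrableOn_mul_haarFn {f : (Fin d → ℝ) → ℝ} {K : Set (Fin d → ℝ)}
    (hf : IntegrableOn f K) : IntegrableOn (fun x => f x * haarFn d j m x) K :=
  hf.mul_bdd measurable_haarFn.aestronglyMeasurable (ae_of_all _ abs_haarFn_le_one)

lemma integrableOn_unitCube_prod {f : Fin d → ℝ → ℝ}
    (hf : ∀ i, IntegrableOn (f i) (Set.Icc 0 1)) :
    IntegrableOn (fun x => ∏ i, f i (x i)) (unitCube d) := by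
  rw [IntegrableOn, volume_restrict_unitCube]
  exact Integrable.fintype_prod hf

lemma haarCoeff_sub {f g : (Fin d → ℝ) → ℝ} (hf : IntegrableOn f (unitCube d))
    (hg : IntegrableOn g (unitCube d)) :
    haarCoeff d (fun x => f x - g x) j m = haarCoeff d f j m - haarCoeff d g j m := by
  simp_rw [haarCoeff, sub_mul]
  exact integral_sub (integrableOn_mul_haarFn hf) (integrableOn_mul_haarFn hg)

lemma haarCoeff_sum {ι : Type*} (t : Finset ι) {f : ι → (Fin d → ℝ) → ℝ}
    (hf : ∀ k ∈ t, IntegrableOn (f k) (unitCube d)) :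
    haarCoeff d (fun x => ∑ k ∈ t, f k x) j m = ∑ k ∈ t, haarCoeff d (f k) j m := by
  simp_rw [haarCoeff, Finset.sum_mul]
  exact integral_finsetSum t fun k hk => integrableOn_mul_haarFn (hf k hk)

lemma haarCoeff_div_const (f : (Fin d → ℝ) → ℝ) (c : ℝ) :
    haarCoeff d (fun x => f x / c) j m = haarCoeff d f j m / c := by
  simp_rw [haarCoeff, div_mul_eq_mul_div]
  exact integral_div c _

lemma haarCoeff_prod (f : Fin d → ℝ → ℝ) :
    haarCoeff d (fun x => ∏ i, f i (x i)) j m =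
      ∏ i, ∫ x in Set.Icc 0 1, f i x * haar1 (j i) (m i) x := by
  simp_rw [haarCoeff, volume_restrict_unitCube, haarFn, ← Finset.prod_mul_distrib]
  exact integral_fintype_prod_eq_prod fun i x => f i x * haar1 (j i) (m i) x

lemma lt_two_pow_of_mem_Dfin (hm : m ∈ Dfin d j) (i : Fin d) : m i < 2 ^ (j i).toNat :=
  Finset.mem_range.1 (Fintype.mem_piFinset.1 hm i)

lemma abs_haarCoeff_prod_id (hj : ∀ i, 0 ≤ j i) (hm : m ∈ Dfin d j) :
    |haarCoeff d (fun x => ∏ i, x i) j m| = (4 ^ (jnorm d j + d))⁻¹ := by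
  rw [haarCoeff_prod fun _ x => x, Finset.abs_prod]
  simp_rw [setIntegral_id_mul_haar1 (hj _) (lt_two_pow_of_mem_Dfin hm _), abs_neg, abs_inv, abs_pow]
  rw [Finset.prod_inv_distrib, Finset.prod_pow_eq_pow_sum, Finset.sum_add_distrib]
  simp [jnorm]

lemma haarCoeff_prod_indicator_Ioi_eq_zero (hj : ∀ i, 0 ≤ j i) (hm : m ∈ Dfin d j)
    {z : Fin d → ℝ} (hz : z ∉ dyadicBox d j m) :
    haarCoeff d (fun x => ∏ i, (Set.Ioi (z i)).indicator 1 (x i)) j m = 0 := by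
  obtain ⟨i, hi⟩ : ∃ i, z i ∉ dyadicI (j i) (m i) := by
    simpa only [dyadicBox, Set.mem_univ_pi, not_forall] using hz
  rw [haarCoeff_prod fun i => (Set.Ioi (z i)).indicator 1]
  exact Finset.prod_eq_zero (Finset.mem_univ i)
    (setIntegral_indicator_Ioi_mul_haar1_eq_zero (hj i) (lt_two_pow_of_mem_Dfin hm i) hi)

lemma discSeq_eq_sum_prod_indicator (S : ℕ → Fin d → ℝ) (N : ℕ) :
    discSeq d S N = fun x : Fin d → ℝ =>
      (∑ k : Fin N, ∏ i, (Set.Ioi (S k i)).indicator 1 (x i)) / N - ∏ i, x i := by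
  classical
  ext x
  rw [discSeq, Nat.card_eq_fintype_card, Fintype.card_subtype, Finset.natCast_card_filter]
  simp_rw [Set.indicator_apply, Set.mem_Ioi, Pi.one_apply, Finset.prod_boole, Finset.mem_univ,
    true_imp_iff]

lemma abs_haarCoeff_discSeq_of_forall_notMem (hj : ∀ i, 0 ≤ j i) (hm : m ∈ Dfin d j)
    {S : ℕ → Fin d → ℝ} {N : ℕ} (hS : ∀ k < N, S k ∉ dyadicBox d j m) :
    |haarCoeff d (discSeq d S N) j m| = (4 ^ (jnorm d j + d))⁻¹ := by
  have counting_integrable (k : Fin N) :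
      IntegrableOn (fun x => ∏ i, (Set.Ioi (S k i)).indicator 1 (x i)) (unitCube d) :=
    integrableOn_unitCube_prod fun i => integrableOn_indicator_Ioi (S k i)
  have volume_integrable : IntegrableOn (fun x => ∏ i, x i) (unitCube d) :=
    integrableOn_unitCube_prod fun _ => continuous_id.continuousOn.integrableOn_Icc
  have counting_coeff_eq_zero (k : Fin N) :=
    haarCoeff_prod_indicator_Ioi_eq_zero hj hm (hS k k.isLt)
  rw [discSeq_eq_sum_prod_indicator,
    haarCoeff_sub ((integrable_finsetSum _ fun k _ => counting_integrable k).div_const _)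
      volume_integrable,
    haarCoeff_div_const, haarCoeff_sum _ fun k _ => counting_integrable k,
    Finset.sum_eq_zero fun k _ => counting_coeff_eq_zero k, zero_div, zero_sub, abs_neg,
    abs_haarCoeff_prod_id hj hm]

end HaarCoefficients

section EmptyBoxes

variable {d : ℕ} {j : Fin d → ℤ}

lemma card_Dfin : (Dfin d j).card = 2 ^ jnorm d j := by
  simp [Dfin, jnorm, Finset.prod_pow_eq_pow_sum]

open scoped Classical in
/-- The indices `m ∈ 𝔻_j` whose dyadic box `I_{j,m}` contains none of the first `N` points of `S`;
these are the boxes on which the Haar coefficients of the discrepancy function are known exactly. -/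
def emptyIndices (d : ℕ) (j : Fin d → ℤ) (S : ℕ → Fin d → ℝ) (N : ℕ) : Finset (Fin d → ℕ) :=
  {m ∈ Dfin d j | ∀ k < N, S k ∉ dyadicBox d j m}

lemma mem_emptyIndices {S : ℕ → Fin d → ℝ} {N : ℕ} {m : Fin d → ℕ} :
    m ∈ emptyIndices d j S N ↔ m ∈ Dfin d j ∧ ∀ k < N, S k ∉ dyadicBox d j m := by
  simp only [emptyIndices, Finset.mem_filter]

lemma emptyIndices_subset_Dfin (S : ℕ → Fin d → ℝ) (N : ℕ) :
    emptyIndices d j S N ⊆ Dfin d j :=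
  fun _ hm => (mem_emptyIndices.1 hm).1

lemma two_pow_jnorm_le_card_emptyIndices_add (S : ℕ → Fin d → ℝ) (N : ℕ) :
    2 ^ jnorm d j ≤ (emptyIndices d j S N).card + N := by
  classical
  have sdiff_subset_image : Dfin d j \ emptyIndices d j S N ⊆
      (Finset.range N).image fun k i => ⌊S k i * 2 ^ (j i).toNat⌋₊ := by
    intro m hm
    obtain ⟨k, hk, hSk⟩ : ∃ k < N, S k ∈ dyadicBox d j m := by
      simpa [mem_emptyIndices, (Finset.mem_sdiff.1 hm).1] using (Finset.mem_sdiff.1 hm).2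
    exact Finset.mem_image.2 ⟨k, Finset.mem_range.2 hk,
      funext fun i => floor_eq_of_mem_dyadicI (hSk i trivial)⟩
  have card_sdiff_le : (Dfin d j \ emptyIndices d j S N).card ≤ N :=
    (Finset.card_le_card sdiff_subset_image).trans
      (Finset.card_image_le.trans (Finset.card_range N).le)
  rw [← card_Dfin, ← Finset.card_sdiff_add_card_eq_card (emptyIndices_subset_Dfin S N), add_comm]
  gcongr

end EmptyBoxes

section Besov

variable {d : ℕ} {p q s : ℝ}

/-- The contribution `2^{|j|(s-1/p+1)q} (∑_{m ∈ 𝔻_j} |⟨f,h_{j,m}⟩|^p)^{q/p}` of the scale vector `j`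
to the sum `besovSum`. -/
def besovBlock (d : ℕ) (p q s : ℝ) (f : (Fin d → ℝ) → ℝ) (j : Fin d → ℤ) : ℝ :=
  (2 : ℝ) ^ ((jnorm d j : ℝ) * (s - 1 / p + 1) * q) *
    (∑ m ∈ Dfin d j, |haarCoeff d f j m| ^ p) ^ (q / p)

lemma sum_besovBlock_le_besovSum (f : (Fin d → ℝ) → ℝ) (A : Finset (Fin d → ℕ)) :
    ∑ j ∈ A, ENNReal.ofReal (besovBlock d p q s f fun i => j i) ≤ besovSum d p q s f := by
  let toValid (j : Fin d → ℕ) : validJ d :=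
    ⟨fun i => j i, fun i => by linarith [(j i).cast_nonneg (α := ℤ)]⟩
  have toValid_injective : Function.Injective toValid := fun a b hab =>
    funext fun i => Nat.cast_injective (congrFun (congrArg Subtype.val hab) i)
  exact (ENNReal.sum_le_tsum A).trans
    (ENNReal.tsum_comp_le_tsum_of_injective toValid_injective fun j =>
      ENNReal.ofReal (besovBlock d p q s f j))

lemma rpow_le_besovBlock (hp : 0 < p) (hq : 0 ≤ q) {f : (Fin d → ℝ) → ℝ} {j : Fin d → ℤ}
    {E : Finset (Fin d → ℕ)} (hE : E ⊆ Dfin d j) {a : ℝ} (ha : 0 ≤ a)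
    (hf : ∀ m ∈ E, a ≤ |haarCoeff d f j m|) :
    ((2 : ℝ) ^ ((jnorm d j : ℝ) * (s - 1 / p + 1)) * ((E.card : ℝ) ^ (1 / p) * a)) ^ q ≤
      besovBlock d p q s f j := by
  have card_mul_le_sum : (E.card : ℝ) * a ^ p ≤ ∑ m ∈ Dfin d j, |haarCoeff d f j m| ^ p :=
    calc (E.card : ℝ) * a ^ p
        ≤ ∑ m ∈ E, |haarCoeff d f j m| ^ p := by
          rw [← nsmul_eq_mul]
          exact Finset.card_nsmul_le_sum _ _ _ fun m hm => by gcongr; exact hf m hm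
      _ ≤ ∑ m ∈ Dfin d j, |haarCoeff d f j m| ^ p :=
          Finset.sum_le_sum_of_subset_of_nonneg hE fun _ _ _ => by positivity
  have rpow_norm_eq : ((E.card : ℝ) ^ (1 / p) * a) ^ q = (E.card * a ^ p) ^ (q / p) := by
    rw [← one_div_mul_eq_div p q, Real.rpow_mul (by positivity),
      Real.mul_rpow (x := (E.card : ℝ)) (by positivity) (by positivity), one_div,
      Real.rpow_rpow_inv ha hp.ne']
  rw [Real.mul_rpow (by positivity) (by positivity), rpow_norm_eq, ← Real.rpow_mul zero_le_two,
    besovBlock]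
  gcongr

lemma rpow_le_besovBlock_discSeq (hp : 0 < p) (hq : 0 ≤ q) {j : Fin d → ℤ} (hj : ∀ i, 0 ≤ j i)
    (S : ℕ → Fin d → ℝ) {N : ℕ} (hN : 2 * N ≤ 2 ^ jnorm d j) :
    ((1 / 2) ^ (1 / p) / 4 ^ d * ((2 : ℝ) ^ jnorm d j) ^ (s - 1)) ^ q ≤
      besovBlock d p q s (discSeq d S N) j := by
  set n := jnorm d j
  have half_le_card : (2 : ℝ) ^ n / 2 ≤ (emptyIndices d j S N).card := by
    have hcard : 2 ^ n ≤ 2 * (emptyIndices d j S N).card := by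
      linarith [two_pow_jnorm_le_card_emptyIndices_add (j := j) S N]
    have hcard' : (2 : ℝ) ^ n ≤ 2 * (emptyIndices d j S N).card := mod_cast hcard
    linarith
  have inv_pow_le_abs_haarCoeff (m) (hm : m ∈ emptyIndices d j S N) :
      (4 ^ (n + d))⁻¹ ≤ |haarCoeff d (discSeq d S N) j m| := by
    obtain ⟨hmD, hempty⟩ := mem_emptyIndices.1 hm
    exact (abs_haarCoeff_discSeq_of_forall_notMem hj hmD hempty).ge
  refine le_trans ?_ (rpow_le_besovBlock hp hq (emptyIndices_subset_Dfin S N) (by positivity)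
    inv_pow_le_abs_haarCoeff)
  calc ((1 / 2) ^ (1 / p) / 4 ^ d * ((2 : ℝ) ^ n) ^ (s - 1)) ^ q
      = (2 ^ (n * (s - 1 / p + 1)) * ((2 ^ n / 2) ^ (1 / p) * (4 ^ (n + d))⁻¹)) ^ q := by
        rw [two_pow_rpow_sub_one_eq n p, div_eq_mul_one_div ((2 : ℝ) ^ n) 2,
          Real.mul_rpow (x := (2 : ℝ) ^ n) (by positivity) (by positivity), pow_add]
        congr 1
        ring
    _ ≤ _ := by gcongr

end Besov

section LowerBound

variable {d : ℕ} {p q s : ℝ}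

lemma le_besovSum_discSeq_of_two_mul_le_two_pow (hd : 0 < d) (hp : 0 < p) (hq : 0 ≤ q)
    (S : ℕ → Fin d → ℝ) {N n : ℕ} (hN : 2 * N ≤ 2 ^ n) :
    ENNReal.ofReal (((n : ℝ) + 1) ^ (d - 1) / (d - 1).factorial *
        ((1 / 2) ^ (1 / p) / 4 ^ d * ((2 : ℝ) ^ n) ^ (s - 1)) ^ q) ≤
      besovSum d p q s (discSeq d S N) := by
  set T : ℝ := ((1 / 2) ^ (1 / p) / 4 ^ d * ((2 : ℝ) ^ n) ^ (s - 1)) ^ q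
  set level := (Finset.univ : Finset (Fin d)).piAntidiag n
  have le_block (j) (hj : j ∈ level) :
      T ≤ besovBlock d p q s (discSeq d S N) fun i => (j i : ℤ) := by
    have hjn : jnorm d (fun i => (j i : ℤ)) = n := (Finset.mem_piAntidiag.1 hj).1
    have := rpow_le_besovBlock_discSeq (s := s) hp hq (fun i => (j i).cast_nonneg) S
      (hN.trans_eq (congrArg (2 ^ ·) hjn.symm))
    rwa [hjn] at this
  calc ENNReal.ofReal (((n : ℝ) + 1) ^ (d - 1) / (d - 1).factorial * T)
      ≤ ENNReal.ofReal (level.card * T) := by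
        gcongr
        exact pow_div_factorial_le_card_piAntidiag_univ hd n
    _ = ∑ _j ∈ level, ENNReal.ofReal T := by
        rw [ENNReal.ofReal_mul (by positivity), ENNReal.ofReal_natCast, Finset.sum_const,
          nsmul_eq_mul]
    _ ≤ ∑ j ∈ level, ENNReal.ofReal (besovBlock d p q s (discSeq d S N) fun i => (j i : ℤ)) :=
        Finset.sum_le_sum fun j hj => ENNReal.ofReal_le_ofReal (le_block j hj)
    _ ≤ besovSum d p q s (discSeq d S N) := sum_besovBlock_le_besovSum _ _

lemma le_rpow_besovSum_discSeq_of_two_mul_le_two_pow (hd : 0 < d) (hp : 0 < p) (hq : 0 < q)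
    (S : ℕ → Fin d → ℝ) {N n : ℕ} (hN : 2 * N ≤ 2 ^ n) :
    ENNReal.ofReal ((1 / (d - 1).factorial) ^ (1 / q) * ((1 / 2) ^ (1 / p) / 4 ^ d) *
        ((2 : ℝ) ^ n) ^ (s - 1) * ((n : ℝ) + 1) ^ (((d : ℝ) - 1) / q)) ≤
      besovSum d p q s (discSeq d S N) ^ (1 / q) := by
  set K : ℝ := (1 / 2) ^ (1 / p) / 4 ^ d
  have count_rpow : (((n : ℝ) + 1) ^ (d - 1) / (d - 1).factorial) ^ (1 / q) =
      (1 / (d - 1).factorial) ^ (1 / q) * ((n : ℝ) + 1) ^ (((d : ℝ) - 1) / q) := by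
    rw [div_eq_mul_one_div (((n : ℝ) + 1) ^ (d - 1)), Real.mul_rpow (by positivity) (by positivity),
      ← Real.rpow_natCast, ← Real.rpow_mul (by positivity), Nat.cast_pred hd, mul_one_div, mul_comm]
  have block_rpow : ((K * ((2 : ℝ) ^ n) ^ (s - 1)) ^ q) ^ (1 / q) =
      K * ((2 : ℝ) ^ n) ^ (s - 1) := by
    rw [one_div, Real.rpow_rpow_inv (by positivity) hq.ne']
  calc ENNReal.ofReal ((1 / (d - 1).factorial) ^ (1 / q) * K *
        ((2 : ℝ) ^ n) ^ (s - 1) * ((n : ℝ) + 1) ^ (((d : ℝ) - 1) / q))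
      = ENNReal.ofReal (((n : ℝ) + 1) ^ (d - 1) / (d - 1).factorial *
          (K * ((2 : ℝ) ^ n) ^ (s - 1)) ^ q) ^ (1 / q) := by
        rw [ENNReal.ofReal_rpow_of_nonneg (by positivity) (by positivity),
          Real.mul_rpow (by positivity) (by positivity), count_rpow, block_rpow]
        ring_nf
    _ ≤ besovSum d p q s (discSeq d S N) ^ (1 / q) := by
        gcongr
        exact le_besovSum_discSeq_of_two_mul_le_two_pow hd hp hq.le S hN

end LowerBound

theorem besov_lower_bound_all_N_general (d : ℕ) (hd : 0 < d) (p q s : ℝ) (hp : 0 < p)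
    (hq : 0 < q) :
    ∃ c : ℝ, 0 < c ∧ ∀ (S : ℕ → Fin d → ℝ) (N : ℕ), 0 < N →
      ENNReal.ofReal (c * (N : ℝ) ^ (s - 1) * Real.log N ^ (((d : ℝ) - 1) / q)) ≤
        (besovSum d p q s (discSeq d S N)) ^ (1 / q) := by
  set K : ℝ := (1 / (d - 1).factorial) ^ (1 / q) * ((1 / 2) ^ (1 / p) / 4 ^ d)
  refine ⟨K * min 1 (4 ^ (s - 1)), by positivity, fun S N hN => ?_⟩
  obtain ⟨n, two_mul_le, le_four_mul⟩ := exists_two_mul_le_two_pow_le_four_mul hN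
  have le_two_pow : N ≤ 2 ^ n := by lia
  have scale_le : min 1 (4 ^ (s - 1)) * (N : ℝ) ^ (s - 1) ≤ ((2 : ℝ) ^ n) ^ (s - 1) :=
    min_one_rpow_mul_rpow_le _ (mod_cast hN) (by norm_num) (mod_cast le_two_pow)
      (mod_cast le_four_mul)
  have log_le : Real.log N ≤ (n : ℝ) + 1 := by
    linarith [log_natCast_le_of_le_two_pow le_two_pow]
  have exponent_nonneg : 0 ≤ ((d : ℝ) - 1) / q :=
    div_nonneg (sub_nonneg.2 (mod_cast hd)) hq.le
  refine le_trans ?_ (le_rpow_besovSum_discSeq_of_two_mul_le_two_pow hd hp hq S two_mul_le)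
  rw [mul_assoc K]
  gcongr

/-- Besov `S^s_{p,q}B` lower bound (valid for every `N ≥ 2`), `0 ≤ s < 1/p`:
the `S^s_{p,q}B`-norm of `D_S^N` is at least `c · N^{s-1} (log N)^{(d-1)/q}`. -/
theorem besov_lower_bound_all_N (d : ℕ) (hd : 0 < d) (p q s : ℝ) (hp : 0 < p) (hq : 0 < q)
    (hs0 : 0 ≤ s) (hs1 : s < 1/p) :
    ∃ c : ℝ, 0 < c ∧ ∀ S : ℕ → Fin d → ℝ, (∀ k, S k ∈ unitCubeIco d) →
      ∀ N : ℕ, 2 ≤ N →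
        ENNReal.ofReal (c * (N:ℝ) ^ (s - 1) * Real.log N ^ (((d:ℝ) - 1)/q)) ≤
          (besovSum d p q s (discSeq d S N)) ^ (1/q) := by
  obtain ⟨c, hc, h⟩ := besov_lower_bound_all_N_general d hd p q s hp hq
  exact ⟨c, hc, fun S _ N hN => h S N (two_pos.trans_le hN)⟩

end
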